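/- Let R be a commutative Noetherian ring and M an R-module. Then the infinite injective dimension locus IID(M) = {p ∈ Spec(R) : id_{R_p}(M_p) = ∞} is contained in V(coca_R(M)). -/

import Mathlib

open CategoryTheory

noncomputable section

universe u

variable (R : Type u) [CommRing R]

/-- The `n`-th Ext group of two `R`-modules, as an `R`-module. -/
abbrev ExtM (n : ℕ) (M N : ModuleCat.{u} R) : ModuleCat.{u} R :=
  ((Ext R (ModuleCat.{u} R) n).obj (Opposite.op M)).obj N

/-- The `n`-th cohomological annihilator of a module `M`:
elements `r` with `r • Ext^i(M, N) = 0` for all `i ≥ n` and all finitely generated `N`. -/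
def caN (n : ℕ) (M : ModuleCat.{u} R) : Ideal R where
  carrier := {r | ∀ i, n ≤ i → ∀ N : ModuleCat.{u} R, Module.Finite R N →
    ∀ x : ExtM R i M N, r • x = 0}
  zero_mem' := by intro i _ N _ x; simp
  add_mem' := by
    intro a b ha hb i hi N hN x
    rw [add_smul, ha i hi N hN x, hb i hi N hN x, add_zero]
  smul_mem' := by
    intro c r hr i hi N hN x
    simp only [smul_eq_mul, mul_smul, hr i hi N hN x, smul_zero]

/-- The cohomological annihilator `ca_R(M) = ⋃ₙ ca_R^n(M)`. -/
def ca (M : ModuleCat.{u} R) : Set R := ⋃ n : ℕ, (caN R n M : Set R)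

/-- The `n`-th co-cohomological annihilator of a module `M`. -/
def cocaN (n : ℕ) (M : ModuleCat.{u} R) : Ideal R where
  carrier := {r | ∀ i, n ≤ i → ∀ N : ModuleCat.{u} R, Module.Finite R N →
    ∀ x : ExtM R i N M, r • x = 0}
  zero_mem' := by intro i _ N _ x; simp
  add_mem' := by
    intro a b ha hb i hi N hN x
    rw [add_smul, ha i hi N hN x, hb i hi N hN x, add_zero]
  smul_mem' := by
    intro c r hr i hi N hN x
    simp only [smul_eq_mul, mul_smul, hr i hi N hN x, smul_zero]

/-- The co-cohomological annihilator `coca_R(M) = ⋃ₙ coca_R^n(M)`. -/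
def coca (M : ModuleCat.{u} R) : Set R := ⋃ n : ℕ, (cocaN R n M : Set R)

/-- `M` has projective dimension at most `n`: `Ext^i(M, -) = 0` for all `i > n`. -/
def projDimLE (n : ℕ) (M : ModuleCat.{u} R) : Prop :=
  ∀ i : ℕ, n < i → ∀ N : ModuleCat.{u} R, Subsingleton (ExtM R i M N)

/-- `M` has injective dimension at most `n`: `Ext^i(-, M) = 0` for all `i > n`. -/
def injDimLE (n : ℕ) (M : ModuleCat.{u} R) : Prop :=
  ∀ i : ℕ, n < i → ∀ N : ModuleCat.{u} R, Subsingleton (ExtM R i N M)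

/-- `K` is an `n`-th syzygy of `M` with respect to resolutions by
finitely generated projective modules. -/
def IsSyz : ℕ → ModuleCat.{u} R → ModuleCat.{u} R → Prop
  | 0, M, K => Nonempty (K ≃ₗ[R] M)
  | n + 1, M, K => ∃ (L P : ModuleCat.{u} R), IsSyz n M L ∧
      Module.Finite R P ∧ Module.Projective R P ∧
      ∃ f : P →ₗ[R] L, Function.Surjective f ∧ Nonempty (K ≃ₗ[R] LinearMap.ker f)

/-- `X` is a direct summand of `Y`. -/
def IsSummand (X Y : ModuleCat.{u} R) : Prop :=
  ∃ (i : X →ₗ[R] Y) (p : Y →ₗ[R] X), p.comp i = LinearMap.id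

/-- `X` is a direct summand of a finite direct sum of copies of `G`. -/
def IsSummandOfCopies (G X : ModuleCat.{u} R) : Prop :=
  ∃ k : ℕ, IsSummand R X (ModuleCat.of R (Fin k → G))

/-- The subcategories `thickⁿ(G)` of `mod R`. -/
def thickN (G : ModuleCat.{u} R) : ℕ → Set (ModuleCat.{u} R)
  | 0 => {X | Subsingleton X}
  | n + 1 => {X | ∃ (Y Y₁ Y₂ : ModuleCat.{u} R) (f : Y₁ →ₗ[R] Y) (g : Y →ₗ[R] Y₂),
      Function.Injective f ∧ Function.Surjective g ∧ LinearMap.ker g = LinearMap.range f ∧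
      ((Y₁ ∈ thickN G n ∧ IsSummandOfCopies R G Y₂) ∨
        (IsSummandOfCopies R G Y₁ ∧ Y₂ ∈ thickN G n)) ∧
      IsSummand R X Y}

/-- The balls `|G|ₙ` of Dao–Takahashi. -/
def ballN (G : ModuleCat.{u} R) : ℕ → Set (ModuleCat.{u} R)
  | 0 => {X | Subsingleton X}
  | n + 1 => {Y | ∃ (Y' Y₁ Y₂ : ModuleCat.{u} R)
      (f : Y₁ →ₗ[R] (ModuleCat.of R (Y × Y'))) (g : (ModuleCat.of R (Y × Y')) →ₗ[R] Y₂),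
      Function.Injective f ∧ Function.Surjective g ∧ LinearMap.ker g = LinearMap.range f ∧
      Y₁ ∈ ballN G n ∧ IsSummandOfCopies R G Y₂}

/-- A regular local ring: a Noetherian local ring whose maximal ideal can be
generated by `dim R` elements. -/
def IsRegularLocal (A : Type u) [CommRing A] [IsLocalRing A] : Prop :=
  IsNoetherianRing A ∧ ∃ s : Finset A, Ideal.span (↑s : Set A) = IsLocalRing.maximalIdeal A ∧
    (s.card : WithBot ℕ∞) = ringKrullDim A

/-- The localization of a module at a prime, as a module category object over the local ring. -/
abbrev locMod (p : PrimeSpectrum R) (M : ModuleCat.{u} R) :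
    ModuleCat.{u} (Localization.AtPrime p.asIdeal) :=
  ModuleCat.of (Localization.AtPrime p.asIdeal) (LocalizedModule p.asIdeal.primeCompl M)

/-- Depth of a module over a local ring, via vanishing of `Ext` from the residue field. -/
def depthE (A : Type u) [CommRing A] [IsLocalRing A] (N : ModuleCat.{u} A) : ℕ∞ :=
  sInf ((fun n : ℕ => (n : ℕ∞)) ''
    {n : ℕ | ¬ Subsingleton (ExtM A n (ModuleCat.of A (IsLocalRing.ResidueField A)) N)})

/-- The large restricted flat dimension of `M`. -/
def rfdE (M : ModuleCat.{u} R) : ℕ∞ :=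
  ⨆ p : PrimeSpectrum R,
    (depthE (Localization.AtPrime p.asIdeal)
        (ModuleCat.of (Localization.AtPrime p.asIdeal) (Localization.AtPrime p.asIdeal)) -
      depthE (Localization.AtPrime p.asIdeal) (locMod R p M))

/-- `r • f` factors through a finitely generated projective module. -/
def FactorsThroughProj (M : ModuleCat.{u} R) (f : M →ₗ[R] M) : Prop :=
  ∃ P : ModuleCat.{u} R, Module.Projective R P ∧ Module.Finite R P ∧
    ∃ (g : M →ₗ[R] P) (h : P →ₗ[R] M), h.comp g = f

/-- The annihilator of the stable endomorphism ring of `M`. -/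
def annStableEnd (M : ModuleCat.{u} R) : Set R :=
  {r | ∀ f : M →ₗ[R] M, FactorsThroughProj R M (r • f)}

/-- A resolving subcategory of `mod R`. -/
def IsResolving (C : Set (ModuleCat.{u} R)) : Prop :=
  (∀ P : ModuleCat.{u} R, Module.Finite R P → Module.Projective R P → P ∈ C) ∧
  (∀ X Y : ModuleCat.{u} R, Y ∈ C → IsSummand R X Y → X ∈ C) ∧
  (∀ (Y Y₁ Y₂ : ModuleCat.{u} R) (f : Y₁ →ₗ[R] Y) (g : Y →ₗ[R] Y₂),
    Function.Injective f → Function.Surjective g → LinearMap.ker g = LinearMap.range f →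
    Y₁ ∈ C → Y₂ ∈ C → Y ∈ C) ∧
  (∀ X ∈ C, ∀ K : ModuleCat.{u} R, IsSyz R 1 X K → K ∈ C)

/-- The smallest resolving subcategory containing `G`. -/
def resCl (G : ModuleCat.{u} R) : Set (ModuleCat.{u} R) :=
  ⋂₀ {C | IsResolving R C ∧ G ∈ C}

end

/-!
Let `r ∈ coca_R(M)` lie outside `p`, so that `r` kills `Ext^{n+1}(N, M)` for some `n` and all
finitely generated `N`. Then `id (M_p) ≤ n`: shifting dimensions along an embedding of `M` into an
injective module, which stays injective after localizing because `R` is Noetherian, reduces this to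
`n = 0`. There, `r` killing `Ext¹(R/I, M)` means that `r • g` extends to `R` for every linear map
`g : I → M`. Every map `I_p → M_p` is a fraction of such a `g`, since `I` is finitely presented, and
`r` is invertible in `R_p`, so `M_p` satisfies Baer's criterion.
-/

section ExtComparison

universe w

variable {A : Type*} [Ring A] {C : Type*} [Category* C] [Abelian C] [Linear A C]
  [HasExt.{w} C] {X : C}

lemma smul_extMk (P : ProjectiveResolution X) {Y : C} {n : ℕ} (a : A) (f : P.complex.X n ⟶ Y)
    (m : ℕ) (hm : n + 1 = m) (hf : P.complex.d m n ≫ f = 0) :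
    a • P.extMk f m hm hf = P.extMk (a • f) m hm (by rw [Linear.comp_smul, hf, smul_zero]) := by
  simp only [Abelian.Ext.smul_eq_comp_mk₀, P.extMk_comp_mk₀, Linear.comp_smul, Category.comp_id]

/-- `P.extMk` as a linear map on the degree `n + 1` cocycles of `Hom(P, Y)`, for a projective
resolution `P` of `X`. -/
noncomputable def extMkLinearMap (P : ProjectiveResolution X) (Y : C) (n : ℕ) :
    LinearMap.ker ((P.complex.linearYonedaObj A Y).sc' n (n + 1) (n + 2)).g.hom →ₗ[A]
      Abelian.Ext X Y (n + 1) where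
  toFun f := P.extMk f.1 (n + 2) rfl f.2
  map_add' f g := (P.add_extMk f.1 g.1 (n + 2) rfl f.2 g.2).symm
  map_smul' a f := (smul_extMk P a f.1 (n + 2) rfl f.2).symm

lemma extMkLinearMap_surjective (P : ProjectiveResolution X) (Y : C) (n : ℕ) :
    Function.Surjective (extMkLinearMap (A := A) P Y n) := by
  intro x
  obtain ⟨f, hf, rfl⟩ := P.extMk_surjective x (n + 2) rfl
  exact ⟨⟨f, hf⟩, rfl⟩

lemma ker_extMkLinearMap (P : ProjectiveResolution X) (Y : C) (n : ℕ) :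
    LinearMap.ker (extMkLinearMap (A := A) P Y n) =
      LinearMap.range
        ((P.complex.linearYonedaObj A Y).sc' n (n + 1) (n + 2)).moduleCatToCycles := by
  ext f
  exact (P.extMk_eq_zero_iff f.1 (n + 2) rfl f.2 n rfl).trans
    (exists_congr fun _ ↦ ⟨fun h ↦ Subtype.ext h, fun h ↦ congrArg Subtype.val h⟩)

/-- The comparison between `Ext` as a left derived functor of `Hom(-, Y)` and `Abelian.Ext`, which
is defined through the derived category. Only positive degrees are treated. -/
noncomputable def extLinearEquiv [EnoughProjectives C] (X Y : C) (n : ℕ) :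
    ((Ext A C (n + 1)).obj (Opposite.op X)).obj Y ≃ₗ[A] Abelian.Ext X Y (n + 1) :=
  let P := projectiveResolution X
  let K := P.complex.linearYonedaObj A Y
  (P.isoExt (n + 1) Y ≪≫ K.homologyIsoSc' n (n + 1) (n + 2) (by simp) (by simp) ≪≫
      (K.sc' n (n + 1) (n + 2)).moduleCatHomologyIso).toLinearEquiv ≪≫ₗ
    Submodule.quotEquivOfEq _ _ (ker_extMkLinearMap P Y n).symm ≪≫ₗ
    (extMkLinearMap P Y n).quotKerEquivOfSurjective (extMkLinearMap_surjective P Y n)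

end ExtComparison

section SmulExt

universe w

variable {A : Type*} [Ring A] {C : Type*} [Category* C] [Abelian C] [Linear A C]
  [HasExt.{w} C] {T : ShortComplex C}

lemma exists_comp_eq_smul_of_smul_ext_one_eq_zero (hT : T.ShortExact) {a : A} {Y : C}
    (ha : ∀ x : Abelian.Ext T.X₃ Y 1, a • x = 0) (g : T.X₁ ⟶ Y) :
    ∃ k : T.X₂ ⟶ Y, T.f ≫ k = a • g := by
  have hag : hT.extClass.comp (Abelian.Ext.mk₀ (a • g)) (add_zero 1) = 0 := by
    rw [Abelian.Ext.mk₀_smul, Abelian.Ext.comp_smul, ha]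
  obtain ⟨x, hx⟩ := Abelian.Ext.contravariant_sequence_exact₁ hT Y _ (add_zero 1) hag
  obtain ⟨k, rfl⟩ := Abelian.Ext.homEquiv₀.symm.surjective x
  rw [Abelian.Ext.homEquiv₀_symm_apply, Abelian.Ext.mk₀_comp_mk₀] at hx
  exact ⟨k, Abelian.Ext.homEquiv₀.symm.injective hx⟩

lemma smul_ext_X₃_eq_zero_of_injective_X₂ (hT : T.ShortExact) [Injective T.X₂] {a : A} {X : C}
    {n : ℕ} (ha : ∀ x : Abelian.Ext X T.X₁ (n + 2), a • x = 0)
    (x : Abelian.Ext X T.X₃ (n + 1)) : a • x = 0 := by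
  have hax : (a • x).comp hT.extClass rfl = 0 := by rw [Abelian.Ext.smul_comp, ha]
  obtain ⟨y, hy⟩ := Abelian.Ext.covariant_sequence_exact₃ X hT _ rfl hax
  rw [← hy, y.eq_zero_of_injective, Abelian.Ext.zero_comp]

end SmulExt

section Localization

variable {R : Type*} [CommRing R] {S : Submonoid R}
  {Rₛ : Type*} [CommRing Rₛ] [Algebra R Rₛ] [IsLocalization S Rₛ]
  {M Mₛ : Type*} [AddCommGroup M] [Module R M] [AddCommGroup Mₛ] [Module R Mₛ] [Module Rₛ Mₛ]
  [IsScalarTower R Rₛ Mₛ]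

lemma exists_comp_mapExtendScalars_eq (fM : M →ₗ[R] Mₛ) [IsLocalizedModule S fM]
    {N Nₛ : Type*} [AddCommGroup N] [Module R N] [AddCommGroup Nₛ] [Module R Nₛ] [Module Rₛ Nₛ]
    [IsScalarTower R Rₛ Nₛ] (fN : N →ₗ[R] Nₛ) [IsLocalizedModule S fN]
    {L Lₛ : Type*} [AddCommGroup L] [Module R L] [AddCommGroup Lₛ] [Module R Lₛ] [Module Rₛ Lₛ]
    [IsScalarTower R Rₛ Lₛ] (fL : L →ₗ[R] Lₛ) [IsLocalizedModule S fL]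
    [Module.FinitePresentation R L] (i : L →ₗ[R] N) {r : R} (hr : r ∈ S)
    (extend : ∀ g : L →ₗ[R] M, ∃ k : N →ₗ[R] M, k ∘ₗ i = r • g) (G : Lₛ →ₗ[Rₛ] Mₛ) :
    ∃ K : Nₛ →ₗ[Rₛ] Mₛ, K ∘ₗ IsLocalizedModule.mapExtendScalars S fL fN Rₛ i = G := by
  obtain ⟨⟨g, s⟩, hg : s.1 • G = _⟩ :=
    IsLocalizedModule.surj S (IsLocalizedModule.mapExtendScalars S fL fM Rₛ) G
  obtain ⟨k, hk⟩ := extend g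
  have hrsG : (r * s.1) • G = IsLocalizedModule.mapExtendScalars S fN fM Rₛ k ∘ₗ
      IsLocalizedModule.mapExtendScalars S fL fN Rₛ i := by
    rw [mul_smul, hg, ← map_smul, ← hk]
    ext x
    exact LinearMap.congr_fun (IsLocalizedModule.map_comp' S fL fN fM i k) x
  refine ⟨IsLocalization.mk' Rₛ 1 (⟨r, hr⟩ * s) •
    IsLocalizedModule.mapExtendScalars S fN fM Rₛ k, ?_⟩
  rw [LinearMap.smul_comp, ← hrsG, ← algebraMap_smul Rₛ (r * s.1) G, smul_smul]
  have mk'_mul_cancel : IsLocalization.mk' Rₛ 1 (⟨r, hr⟩ * s) * algebraMap R Rₛ (r * s.1) = 1 := by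
    exact (IsLocalization.mk'_spec Rₛ (1 : R) (⟨r, hr⟩ * s)).trans (map_one _)
  rw [mk'_mul_cancel, one_smul]

variable (Rₛ) in
lemma mapExtendScalars_subtype_eq_subtype_localized' (I : Ideal R) :
    IsLocalizedModule.mapExtendScalars S (I.toLocalized' Rₛ S (Algebra.linearMap R Rₛ))
      (Algebra.linearMap R Rₛ) Rₛ I.subtype =
    (I.localized' Rₛ S (Algebra.linearMap R Rₛ)).subtype := by
  apply LinearMap.restrictScalars_injective R
  apply IsLocalizedModule.linearMap_ext S (I.toLocalized' Rₛ S (Algebra.linearMap R Rₛ))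
    (Algebra.linearMap R Rₛ)
  ext x
  exact IsLocalizedModule.map_apply S (I.toLocalized' Rₛ S (Algebra.linearMap R Rₛ))
    (Algebra.linearMap R Rₛ) I.subtype x

variable (Rₛ) in
lemma baer_of_isLocalizedModule_of_smul_extends [IsNoetherianRing R] (fM : M →ₗ[R] Mₛ)
    [IsLocalizedModule S fM] {r : R} (hr : r ∈ S)
    (extend : ∀ (I : Ideal R) (g : I →ₗ[R] M), ∃ k : R →ₗ[R] M, k ∘ₗ I.subtype = r • g) :
    Module.Baer Rₛ Mₛ := by
  rw [Module.Baer.iff_surjective]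
  intro J
  obtain ⟨I, rfl⟩ : ∃ I : Ideal R, I.localized' Rₛ S (Algebra.linearMap R Rₛ) = J :=
    ⟨J.under R, by rw [Ideal.localized'_eq_map, IsLocalization.map_under S]⟩
  have := Module.finitePresentation_of_finite R I
  rw [← mapExtendScalars_subtype_eq_subtype_localized']
  exact exists_comp_mapExtendScalars_eq fM _ _ I.subtype hr (extend I)

end Localization

section InjectiveDimension

universe u

variable {R : Type u} [CommRing R]

lemma injDimLE_iff_hasInjectiveDimensionLE {M : ModuleCat.{u} R} {n : ℕ} :
    injDimLE R n M ↔ HasInjectiveDimensionLE M n := by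
  rw [HasInjectiveDimensionLE, hasInjectiveDimensionLT_iff.{u}]
  constructor
  · rintro h (_ | i) hi N x
    · omega
    · have := h (i + 1) hi N
      exact (extLinearEquiv (A := R) N M i).symm.injective (Subsingleton.elim _ _)
  · rintro h (_ | i) hi N
    · omega
    · have : Subsingleton (Abelian.Ext N M (i + 1)) :=
        subsingleton_of_forall_eq 0 fun x ↦ h (i + 1) hi x
      exact (extLinearEquiv (A := R) N M i).toEquiv.subsingleton

lemma exists_comp_subtype_eq_smul_of_smul_ext_one_eq_zero {M : ModuleCat.{u} R} {r : R}
    (I : Ideal R) (hr : ∀ x : Abelian.Ext (ModuleCat.of R (R ⧸ I)) M 1, r • x = 0) (g : I →ₗ[R] M) :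
    ∃ k : R →ₗ[R] M, k ∘ₗ I.subtype = r • g := by
  have exact_mkQ : Function.Exact I.subtype I.mkQ := LinearMap.exact_subtype_mkQ I
  obtain ⟨k, hk⟩ := exists_comp_eq_smul_of_smul_ext_one_eq_zero
    (ModuleCat.shortComplex_shortExact (ModuleCat.shortComplexOfCompEqZero _ _
      exact_mkQ.linearMap_comp_eq_zero) exact_mkQ I.subtype_injective I.mkQ_surjective)
    hr (ModuleCat.ofHom g)
  exact ⟨k.hom, congrArg ModuleCat.Hom.hom hk⟩

theorem hasInjectiveDimensionLE_localizedModule_of_smul_ext_eq_zero [IsNoetherianRing R]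
    {S : Submonoid R} {r : R} (hr : r ∈ S) {n : ℕ} {M : ModuleCat.{u} R}
    (hrM : ∀ N : ModuleCat.{u} R, Module.Finite R N →
      ∀ x : Abelian.Ext N M (n + 1), r • x = 0) :
    HasInjectiveDimensionLE (M.localizedModule S) n := by
  induction n generalizing M with
  | zero =>
    rw [HasInjectiveDimensionLE, zero_add, ← injective_iff_hasInjectiveDimensionLT_one,
      ← Module.injective_iff_injective_object, ← Module.Baer.iff_injective]
    exact baer_of_isLocalizedModule_of_smul_extends _ (M.localizedModuleMkLinearMap S) hr fun I ↦
      exists_comp_subtype_eq_smul_of_smul_ext_one_eq_zero I (hrM _ inferInstance)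
  | succ n ih =>
    obtain ⟨E⟩ := EnoughInjectives.presentation M
    have hE := E.shortExact_shortComplex
    have : Injective E.shortComplex.X₂ := E.injective
    have hES := hE.map_of_exact (ModuleCat.localizedModuleFunctor S)
    have injective_localized := (ModuleCat.localizedModuleFunctor.{u} S).injective_obj E.J
    exact (hES.hasInjectiveDimensionLT_X₃_iff n injective_localized).1
      (ih fun N hN ↦ smul_ext_X₃_eq_zero_of_injective_X₂ hE (hrM N hN))

end InjectiveDimension

/-- `IID(M) ⊆ V(coca_R(M))`. -/
theorem stmt14 (R : Type u) [CommRing R] [IsNoetherianRing R]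
    (M : ModuleCat.{u} R) (p : PrimeSpectrum R)
    (hp : ∀ n : ℕ, ¬ injDimLE (Localization.AtPrime p.asIdeal) n (locMod R p M)) :
    coca R M ⊆ (p.asIdeal : Set R) := by
  intro r hr
  by_contra hrp
  obtain ⟨n, hn⟩ := Set.mem_iUnion.1 hr
  have smul_ext (N : ModuleCat.{u} R) (hN : Module.Finite R N)
      (x : Abelian.Ext N M (n + 1)) : r • x = 0 := by
    rw [← map_eq_zero_iff _ (extLinearEquiv (A := R) N M n).symm.injective, map_smul]
    exact hn (n + 1) n.le_succ N hN _
  have id_le : HasInjectiveDimensionLE (M.localizedModule p.asIdeal.primeCompl) n :=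
    hasInjectiveDimensionLE_localizedModule_of_smul_ext_eq_zero hrp smul_ext
  exact hp n (injDimLE_iff_hasInjectiveDimensionLE.2
    ((ModuleCat.hasInjectiveDimensionLE_iff_of_linearEquiv
      (Shrink.linearEquiv (Localization.AtPrime p.asIdeal) _) n).1 id_le))
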